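/- For any value distribution F on [0,∞) and a single additive buyer with two item values drawn i.i.d. from F, for every deterministic menu there exists a symmetric deterministic menu with at least as much expected revenue. -/

import Mathlib

open MeasureTheory

/-- Payment made by a utility-maximizing additive buyer with values `(v1, v2)` facing the
deterministic menu charging `a` for item 1, `b` for item 2, `c` for the pair;
ties are broken in favor of the higher payment. -/
noncomputable def pay (a b c v1 v2 : ℝ) : ℝ :=
  let u1 := v1 - a
  let u2 := v2 - b
  let u12 := v1 + v2 - c
  let m := max (max 0 u1) (max u2 u12)
  max (if u1 = m then a else 0) (max (if u2 = m then b else 0) (if u12 = m then c else 0))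

/-- Expected revenue of the menu `(a, b, c)` when values are drawn from `μ`. -/
noncomputable def rev (μ : Measure (ℝ × ℝ)) (a b c : ℝ) : ℝ :=
  ∫ v, pay a b c v.1 v.2 ∂μ

/-- Indicator of the event that a value reaches the price `t`. -/
noncomputable def accepts (t v : ℝ) : ℝ := if t ≤ v then 1 else 0

/-- The probability that a value drawn from `μ` reaches the price `t`. -/
noncomputable def demand (μ : Measure ℝ) (t : ℝ) : ℝ := ∫ v, accepts t v ∂μ

lemma pay_cases {a b c : ℝ} (ha : 0 ≤ a) (hb : 0 ≤ b) (hac : a ≤ c) (hbc : b ≤ c) (v1 v2 : ℝ) :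
    (pay a b c v1 v2 = c ∧ c ≤ v1 + v2 ∧ c - a ≤ v2 ∧ c - b ≤ v1) ∨
    (pay a b c v1 v2 = a ∧ a ≤ v1 ∧ v2 < c - a ∧ v2 - b ≤ v1 - a ∧
      (v2 - b = v1 - a → b ≤ a)) ∨
    (pay a b c v1 v2 = b ∧ b ≤ v2 ∧ v1 < c - b ∧ v1 - a ≤ v2 - b ∧
      (v1 - a = v2 - b → a ≤ b)) ∨
    (pay a b c v1 v2 = 0 ∧ v1 < a ∧ v2 < b ∧ v1 + v2 < c) := by
  unfold pay
  dsimp only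
  set m := max (max 0 (v1 - a)) (max (v2 - b) (v1 + v2 - c)) with hm
  have h0 : 0 ≤ m := by simp [hm]
  have h1 : v1 - a ≤ m := by simp [hm]
  have h2 : v2 - b ≤ m := by simp [hm]
  have h3 : v1 + v2 - c ≤ m := by simp [hm]
  have h4 : m = 0 ∨ m = v1 - a ∨ m = v2 - b ∨ m = v1 + v2 - c := by
    rcases max_choice (max 0 (v1 - a)) (max (v2 - b) (v1 + v2 - c)) with h | h <;>
      rw [h] at hm
    · rcases max_choice 0 (v1 - a) with h | h <;> rw [h] at hm <;> simp [hm]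
    · rcases max_choice (v2 - b) (v1 + v2 - c) with h | h <;> rw [h] at hm <;> simp [hm]
  clear_value m
  by_cases e3 : v1 + v2 - c = m
  · left
    refine ⟨?_, by linarith, by linarith, by linarith⟩
    rw [if_pos e3]
    apply le_antisymm
    · refine max_le ?_ (max_le ?_ le_rfl) <;> split_ifs <;> linarith
    · exact le_trans (le_max_right _ _) (le_max_right _ _)
  have l3 := lt_of_le_of_ne h3 e3
  right
  rw [if_neg e3]
  by_cases e1 : v1 - a = m <;> by_cases e2 : v2 - b = m
  · rcases le_total b a with hba | hab
    · left
      refine ⟨?_, by linarith, by linarith, by linarith, fun _ => hba⟩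
      simp [e1, e2, hb, hba]
    · right; left
      refine ⟨?_, by linarith, by linarith, by linarith, fun _ => hab⟩
      simp [e1, e2, hb, hab]
  · left
    refine ⟨by simp [e1, e2, ha], by linarith, by linarith, by linarith, fun h => ?_⟩
    exact absurd (h.trans e1) e2
  · right; left
    refine ⟨by simp [e1, e2, hb], by linarith, by linarith, by linarith, fun h => ?_⟩
    exact absurd (h.trans e2) e1
  · right; right
    have hm0 : m = 0 := by
      rcases h4 with h | h | h | h
      · exact h
      · exact absurd h.symm e1
      · exact absurd h.symm e2
      · exact absurd h.symm e3
    have l1 := lt_of_le_of_ne h1 e1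
    have l2 := lt_of_le_of_ne h2 e2
    exact ⟨by simp [e1, e2], by linarith, by linarith, by linarith⟩

lemma pay_add_pay_swap {a b c : ℝ} (ha : 0 ≤ a) (hb : 0 ≤ b) (hac : a ≤ c) (hbc : b ≤ c)
    (h2a : c ≤ 2 * a) (h2b : c ≤ 2 * b) (v1 v2 : ℝ) :
    pay a b c v1 v2 + pay a b c v2 v1 = pay a a c v1 v2 + pay b b c v1 v2 := by
  rcases pay_cases ha hb hac hbc v1 v2 with h | h | h | h <;>
  rcases pay_cases ha hb hac hbc v2 v1 with k | k | k | k <;>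
  (try (exfalso; linarith)) <;>
  rcases pay_cases ha ha hac hac v1 v2 with l | l | l | l <;>
  (try (exfalso; linarith)) <;>
  rcases pay_cases hb hb hbc hbc v1 v2 with n | n | n | n <;>
  first
    | (exfalso; linarith)
    | linarith

lemma pay_add_pay_swap_sub_le {a b c : ℝ} (ha : 0 ≤ a) (hb : 0 ≤ b) (hac : a ≤ c) (hbc : b ≤ c)
    (h2a : 2 * a ≤ c) (hsub : c ≤ a + b) (v1 v2 : ℝ) :
    pay a b c v1 v2 + pay a b c v2 v1 - pay b b c v1 v2 ≤
      a * accepts a v1 * (1 - accepts (c - a) v2) + a * accepts a v2 * (1 - accepts (c - a) v1) +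
        c * (accepts (c - a) v1 * accepts (c - a) v2) := by
  unfold accepts
  rcases pay_cases ha hb hac hbc v1 v2 with h | h | h | h <;>
  rcases pay_cases ha hb hac hbc v2 v1 with k | k | k | k <;>
  (try (exfalso; linarith)) <;>
  rcases pay_cases hb hb hbc hbc v1 v2 with n | n | n | n <;>
  (try (exfalso; linarith)) <;>
  split_ifs <;> linarith

lemma pay_separate {t : ℝ} (ht : 0 ≤ t) (v1 v2 : ℝ) :
    pay t t (2 * t) v1 v2 = t * accepts t v1 + t * accepts t v2 := by
  unfold accepts
  rcases pay_cases ht ht (by linarith : t ≤ 2 * t) (by linarith) v1 v2 with h | h | h | h <;>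
  split_ifs <;> linarith

lemma pay_le_of_add_le {a b c : ℝ} (ha : 0 ≤ a) (hab : a ≤ b) (hsup : a + b ≤ c) (v1 v2 : ℝ) :
    pay a b c v1 v2 ≤ b * accepts b v2 + a * accepts a v1 * (1 - accepts b v2) +
      (c - b) * (accepts (c - b) v1 * accepts (c - a) v2) := by
  unfold accepts
  rcases pay_cases ha (ha.trans hab) (by linarith : a ≤ c) (by linarith) v1 v2
    with h | h | h | h <;>
  split_ifs <;> linarith

lemma measurable_accepts (t : ℝ) : Measurable (accepts t) :=
  Measurable.ite measurableSet_Ici measurable_const measurable_const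

lemma accepts_nonneg (t v : ℝ) : 0 ≤ accepts t v := by
  unfold accepts; split_ifs <;> norm_num

lemma accepts_le_one (t v : ℝ) : accepts t v ≤ 1 := by
  unfold accepts; split_ifs <;> norm_num

lemma measurable_pay (a b c : ℝ) : Measurable fun v : ℝ × ℝ => pay a b c v.1 v.2 := by
  unfold pay
  refine Measurable.max ?_ (Measurable.max ?_ ?_) <;>
  exact Measurable.ite (measurableSet_eq_fun (by fun_prop) (by fun_prop))
    measurable_const measurable_const

lemma demand_nonneg (μ : Measure ℝ) (t : ℝ) : 0 ≤ demand μ t :=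
  integral_nonneg (accepts_nonneg t)

section Integrals

variable (μ : Measure ℝ) [IsProbabilityMeasure μ]

lemma integrable_pay {a b c : ℝ} (ha : 0 ≤ a) (hb : 0 ≤ b) (hac : a ≤ c) (hbc : b ≤ c) :
    Integrable (fun v : ℝ × ℝ => pay a b c v.1 v.2) (μ.prod μ) := by
  refine Integrable.of_bound (measurable_pay a b c).aestronglyMeasurable c (.of_forall fun v => ?_)
  rw [Real.norm_eq_abs, abs_le]
  rcases pay_cases ha hb hac hbc v.1 v.2 with h | h | h | h <;> constructor <;> linarith

lemma integrable_accepts (t : ℝ) : Integrable (accepts t) μ := by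
  refine Integrable.of_bound (measurable_accepts t).aestronglyMeasurable 1 (.of_forall fun v => ?_)
  rw [Real.norm_eq_abs, abs_of_nonneg (accepts_nonneg t v)]
  exact accepts_le_one t v

lemma integrable_accepts_mul (s t : ℝ) :
    Integrable (fun v : ℝ × ℝ => accepts s v.1 * accepts t v.2) (μ.prod μ) :=
  (integrable_accepts μ s).mul_prod (integrable_accepts μ t)

lemma integral_accepts_mul (s t : ℝ) :
    ∫ v, accepts s v.1 * accepts t v.2 ∂(μ.prod μ) = demand μ s * demand μ t :=
  integral_prod_mul _ _

lemma integral_accepts_fst (t : ℝ) : ∫ v, accepts t v.1 ∂(μ.prod μ) = demand μ t := by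
  simp [integral_fun_fst, demand]

lemma integral_accepts_snd (t : ℝ) : ∫ v, accepts t v.2 ∂(μ.prod μ) = demand μ t := by
  simp [integral_fun_snd, demand]

lemma demand_le_one (t : ℝ) : demand μ t ≤ 1 := by
  have := integral_mono (integrable_accepts μ t) (integrable_const 1) (accepts_le_one t)
  simpa [demand] using this

lemma demand_anti {s t : ℝ} (h : s ≤ t) : demand μ t ≤ demand μ s := by
  refine integral_mono (integrable_accepts μ t) (integrable_accepts μ s) fun v => ?_
  simp only [accepts]
  split_ifs <;> linarith

lemma integral_pay_swap (a b c : ℝ) :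
    ∫ v, pay a b c v.2 v.1 ∂(μ.prod μ) = rev (μ.prod μ) a b c :=
  integral_prod_swap (μ := μ) (ν := μ) fun v : ℝ × ℝ => pay a b c v.1 v.2

lemma rev_swap {a b c : ℝ} : rev (μ.prod μ) a b c = rev (μ.prod μ) b a c := by
  rw [← integral_pay_swap]
  unfold rev pay
  refine integral_congr_ae (.of_forall fun v => ?_)
  dsimp only
  rw [add_comm v.2 v.1, max_assoc, max_assoc, max_left_comm (v.2 - a), max_left_comm]

lemma rev_separate {t : ℝ} (ht : 0 ≤ t) :
    rev (μ.prod μ) t t (2 * t) = 2 * (t * demand μ t) := by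
  simp only [rev, pay_separate ht]
  rw [integral_add (((integrable_accepts μ t).comp_fst μ).const_mul t)
    (((integrable_accepts μ t).comp_snd μ).const_mul t), integral_const_mul, integral_const_mul,
    integral_accepts_fst, integral_accepts_snd]
  ring

lemma two_mul_rev_eq {a b c : ℝ} (ha : 0 ≤ a) (hb : 0 ≤ b) (hac : a ≤ c) (hbc : b ≤ c)
    (h2a : c ≤ 2 * a) (h2b : c ≤ 2 * b) :
    2 * rev (μ.prod μ) a b c = rev (μ.prod μ) a a c + rev (μ.prod μ) b b c := by
  have hi := integrable_pay μ ha hb hac hbc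
  calc 2 * rev (μ.prod μ) a b c
      = rev (μ.prod μ) a b c + ∫ v, pay a b c v.2 v.1 ∂(μ.prod μ) := by
        rw [integral_pay_swap]; ring
    _ = ∫ v, (pay a b c v.1 v.2 + pay a b c v.2 v.1) ∂(μ.prod μ) :=
        (integral_add hi hi.swap).symm
    _ = ∫ v, (pay a a c v.1 v.2 + pay b b c v.1 v.2) ∂(μ.prod μ) := by
        simp only [pay_add_pay_swap ha hb hac hbc h2a h2b]
    _ = _ := integral_add (integrable_pay μ ha ha hac hac) (integrable_pay μ hb hb hbc hbc)

lemma two_mul_rev_sub_le {a b c : ℝ} (ha : 0 ≤ a) (hb : 0 ≤ b) (hac : a ≤ c) (hbc : b ≤ c)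
    (h2a : 2 * a ≤ c) (hsub : c ≤ a + b) :
    2 * rev (μ.prod μ) a b c - rev (μ.prod μ) b b c ≤
      2 * (a * demand μ a * (1 - demand μ (c - a))) + c * demand μ (c - a) ^ 2 := by
  have hi := integrable_pay μ ha hb hac hbc
  have hj := integrable_pay μ hb hb hbc hbc
  have h1 := ((integrable_accepts μ a).comp_fst μ).const_mul a
  have h2 := ((integrable_accepts μ a).comp_snd μ).const_mul a
  have h3 := (integrable_accepts_mul μ a (c - a)).const_mul a
  have h4 := (integrable_accepts_mul μ (c - a) a).const_mul a
  have h5 := (integrable_accepts_mul μ (c - a) (c - a)).const_mul c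
  calc 2 * rev (μ.prod μ) a b c - rev (μ.prod μ) b b c
      = rev (μ.prod μ) a b c + (∫ v, pay a b c v.2 v.1 ∂(μ.prod μ)) - rev (μ.prod μ) b b c := by
        rw [integral_pay_swap]; ring
    _ = ∫ v, (pay a b c v.1 v.2 + pay a b c v.2 v.1 - pay b b c v.1 v.2) ∂(μ.prod μ) := by
        rw [integral_sub, integral_add]
        · rfl
        exacts [hi, hi.swap, hi.add hi.swap, hj]
    _ ≤ ∫ v, (a * accepts a v.1 + a * accepts a v.2
          - a * (accepts a v.1 * accepts (c - a) v.2) - a * (accepts (c - a) v.1 * accepts a v.2)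
          + c * (accepts (c - a) v.1 * accepts (c - a) v.2)) ∂(μ.prod μ) := by
        refine integral_mono ((hi.add hi.swap).sub hj) ((((h1.add h2).sub h3).sub h4).add h5)
          fun v => ?_
        refine (pay_add_pay_swap_sub_le ha hb hac hbc h2a hsub v.1 v.2).trans (le_of_eq ?_)
        ring
    _ = _ := by
        rw [integral_add, integral_sub, integral_sub, integral_add]
        · simp only [integral_const_mul, integral_accepts_fst, integral_accepts_snd,
            integral_accepts_mul]
          ring
        exacts [h1, h2, h1.add h2, h3, (h1.add h2).sub h3, h4, ((h1.add h2).sub h3).sub h4, h5]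

lemma rev_le_of_add_le {a b c : ℝ} (ha : 0 ≤ a) (hab : a ≤ b) (hsup : a + b ≤ c) :
    rev (μ.prod μ) a b c ≤ b * demand μ b + a * demand μ a * (1 - demand μ b) +
      (c - b) * demand μ (c - b) * demand μ (c - a) := by
  have h1 := ((integrable_accepts μ b).comp_snd μ).const_mul b
  have h2 := ((integrable_accepts μ a).comp_fst μ).const_mul a
  have h3 := (integrable_accepts_mul μ a b).const_mul a
  have h4 := (integrable_accepts_mul μ (c - b) (c - a)).const_mul (c - b)
  calc rev (μ.prod μ) a b c
      ≤ ∫ v, (b * accepts b v.2 + a * accepts a v.1 - a * (accepts a v.1 * accepts b v.2)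
          + (c - b) * (accepts (c - b) v.1 * accepts (c - a) v.2)) ∂(μ.prod μ) := by
        refine integral_mono
          (integrable_pay μ ha (ha.trans hab) (by linarith) (by linarith))
          (((h1.add h2).sub h3).add h4) fun v => ?_
        refine (pay_le_of_add_le ha hab hsup v.1 v.2).trans (le_of_eq ?_)
        ring
    _ = _ := by
        rw [integral_add, integral_sub, integral_add]
        · simp only [integral_const_mul, integral_accepts_fst, integral_accepts_snd,
            integral_accepts_mul]
          ring
        exacts [h1, h2, h1.add h2, h3, (h1.add h2).sub h3, h4]

lemma exists_symmetric_of_separate {r t : ℝ} (ht : 0 ≤ t) (h : r ≤ 2 * (t * demand μ t)) :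
    ∃ p q : ℝ, 0 ≤ p ∧ p ≤ q ∧ r ≤ rev (μ.prod μ) p p q :=
  ⟨t, 2 * t, ht, by linarith, h.trans_eq (rev_separate μ ht).symm⟩

lemma exists_symmetric_of_le {a b c : ℝ} (ha : 0 ≤ a) (hab : a ≤ b) (hbc : b ≤ c) :
    ∃ p q : ℝ, 0 ≤ p ∧ p ≤ q ∧ rev (μ.prod μ) a b c ≤ rev (μ.prod μ) p p q := by
  have hb := ha.trans hab
  have hac := hab.trans hbc
  rcases le_total (a + b) c with hsup | hsub
  · have hrev := rev_le_of_add_le μ ha hab hsup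
    have hb1 := demand_le_one μ b
    have hx0 := demand_nonneg μ (c - a)
    have hxb := demand_anti μ (by linarith : b ≤ c - a)
    have key : ∀ M, 0 ≤ M → a * demand μ a ≤ M → b * demand μ b ≤ M →
        (c - b) * demand μ (c - b) ≤ M → rev (μ.prod μ) a b c ≤ 2 * M := by
      intro M hM h1 h2 h3
      nlinarith [mul_le_mul_of_nonneg_right h1 (sub_nonneg.2 hb1),
        mul_le_mul_of_nonneg_right h3 hx0, mul_le_mul_of_nonneg_left hxb hM]
    have h0 : ∀ t, 0 ≤ t → 0 ≤ t * demand μ t := fun t ht => mul_nonneg ht (demand_nonneg μ t)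
    have hy : 0 ≤ c - b := sub_nonneg.2 hbc
    rcases le_total (a * demand μ a) (b * demand μ b) with h1 | h1 <;>
    rcases le_total (a * demand μ a) ((c - b) * demand μ (c - b)) with h2 | h2 <;>
    rcases le_total (b * demand μ b) ((c - b) * demand μ (c - b)) with h3 | h3 <;>
    first
      | exact exists_symmetric_of_separate μ ha (key _ (h0 a ha) le_rfl (by linarith) (by linarith))
      | exact exists_symmetric_of_separate μ hb (key _ (h0 b hb) (by linarith) le_rfl (by linarith))
      | exact exists_symmetric_of_separate μ hy (key _ (h0 _ hy) (by linarith) (by linarith) le_rfl)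
  by_cases hrevb : rev (μ.prod μ) a b c ≤ rev (μ.prod μ) b b c
  · exact ⟨b, c, hb, hbc, hrevb⟩
  rcases le_total c (2 * a) with h2a | h2a
  · refine ⟨a, c, ha, hac, ?_⟩
    linarith [two_mul_rev_eq μ ha hb hac hbc h2a (by linarith)]
  have hrev := two_mul_rev_sub_le μ ha hb hac hbc h2a hsub
  have hx0 := demand_nonneg μ (c - a)
  have hx1 := demand_le_one μ (c - a)
  have hxa := demand_anti μ (by linarith : a ≤ c - a)
  have hax := mul_le_mul_of_nonneg_left hxa ha
  rcases le_total ((c - a) * demand μ (c - a)) (a * demand μ a) with h | h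
  · refine exists_symmetric_of_separate μ ha ?_
    nlinarith [mul_le_mul_of_nonneg_right (add_le_add h hax) hx0]
  · refine exists_symmetric_of_separate μ (sub_nonneg.2 hac) ?_
    nlinarith [mul_le_mul_of_nonneg_right (hax.trans h) hx0,
      mul_le_mul_of_nonneg_right h (sub_nonneg.2 hx1)]

end Integrals

theorem stmt12 (μ : Measure ℝ) [IsProbabilityMeasure μ] (hsupp : μ (Set.Iio 0) = 0)
    (a b c : ℝ) (ha : 0 ≤ a) (hb : 0 ≤ b) (hc : max a b ≤ c) :
    ∃ p q : ℝ, 0 ≤ p ∧ p ≤ q ∧ rev (μ.prod μ) a b c ≤ rev (μ.prod μ) p p q := by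
  rcases le_total a b with h | h
  · exact exists_symmetric_of_le μ ha h ((le_max_right a b).trans hc)
  · rw [rev_swap]
    exact exists_symmetric_of_le μ hb h ((le_max_left a b).trans hc)
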